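/- arXiv:1908.08245 — 2 statements merged into one kernel-verified Lean document; each statement's English description precedes it below -/
import Mathlib

section
/- Let L̂ ∈ ℝ^{N×N} be the Laplacian L̂ = D − Â of a symmetric matrix Â = [â_{ij}] with â_{ij} ≥ 0 (D = diag of row sums of Â) whose associated undirected graph (edge {i,j} whenever â_{ij} > 0) is connected. Let B_1,…,B_N ∈ ℝ^{n×n} be symmetric positive semidefinite matrices such that Σ_{i=1}^N B_i is positive definite. Then the Nn × Nn matrix L̂ ⊗ I_n + blockdiag(B_1,…,B_N) is positive definite, where ⊗ denotes the Kronecker product. -/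
open Matrix
open scoped Kronecker

/-- Laplacian matrix of a weighted adjacency matrix. -/
def lapl {N : ℕ} (A : Matrix (Fin N) (Fin N) ℝ) : Matrix (Fin N) (Fin N) ℝ :=
  Matrix.diagonal (fun i => ∑ j, A i j) - A

theorem lapl_quad {N : ℕ} (A : Matrix (Fin N) (Fin N) ℝ) (hs : ∀ i j, A i j = A j i)
    (v : Fin N → ℝ) :
    ∑ i, ∑ j, v i * lapl A i j * v j = (1 / 2) * ∑ i, ∑ j, A i j * (v i - v j) ^ 2 := by
  have h1 : ∑ i, ∑ j, v i * lapl A i j * v j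
      = ∑ i, ∑ j, A i j * v i ^ 2 - ∑ i, ∑ j, A i j * (v i * v j) := by
    rw [← Finset.sum_sub_distrib]
    refine Finset.sum_congr rfl fun i _ => ?_
    simp only [lapl, Matrix.sub_apply, Matrix.diagonal_apply, mul_sub, sub_mul,
      Finset.sum_sub_distrib, mul_ite, ite_mul, mul_zero, zero_mul, Finset.sum_ite_eq,
      Finset.mem_univ, if_true]
    congr 1
    · rw [← Finset.sum_mul]; ring
    · exact Finset.sum_congr rfl fun j _ => by ring
  have h2 : ∑ i, ∑ j, A i j * v j ^ 2 = ∑ i, ∑ j, A i j * v i ^ 2 := by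
    rw [Finset.sum_comm]
    exact Finset.sum_congr rfl fun i _ => Finset.sum_congr rfl fun j _ => by rw [hs]
  have h3 : ∑ i, ∑ j, A i j * (v i - v j) ^ 2 = ∑ i, ∑ j, A i j * v i ^ 2
      + ∑ i, ∑ j, A i j * v j ^ 2 - 2 * ∑ i, ∑ j, A i j * (v i * v j) := by
    simp only [Finset.mul_sum, ← Finset.sum_sub_distrib, ← Finset.sum_add_distrib]
    exact Finset.sum_congr rfl fun i _ => Finset.sum_congr rfl fun j _ => by ring
  rw [h1, h3, h2]; ring

theorem full_quad {N n : ℕ} (L : Matrix (Fin N) (Fin N) ℝ)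
    (B : Fin N → Matrix (Fin n) (Fin n) ℝ) (x : Fin N × Fin n → ℝ) :
    star x ⬝ᵥ (((L ⊗ₖ (1 : Matrix (Fin n) (Fin n) ℝ))
        + Matrix.of fun p q : Fin N × Fin n =>
            if p.1 = q.1 then B p.1 p.2 q.2 else 0) *ᵥ x)
      = ∑ k, ∑ i, ∑ j, x (i, k) * L i j * x (j, k)
        + ∑ i, star (fun k => x (i, k)) ⬝ᵥ (B i *ᵥ (fun k => x (i, k))) := by
  rw [Matrix.add_mulVec, dotProduct_add]
  congr 1
  · simp only [dotProduct, mulVec, Fintype.sum_prod_type, kroneckerMap_apply, Matrix.one_apply,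
      mul_ite, ite_mul, mul_one, mul_zero, zero_mul, Finset.sum_ite_eq, Finset.mem_univ, if_true,
      Pi.star_apply, star_trivial]
    rw [Finset.sum_comm]
    simp only [Finset.mul_sum, mul_assoc]
  · simp only [dotProduct, mulVec, Fintype.sum_prod_type, Matrix.of_apply,
      ite_mul, zero_mul, Pi.star_apply, star_trivial]
    refine Finset.sum_congr rfl fun i _ => Finset.sum_congr rfl fun k _ => ?_
    congr 1
    rw [Finset.sum_comm]
    simp

/-- **Positive definiteness of `L̂ ⊗ I_n + blockdiag(B_1,…,B_N)`.**
If `L̂` is the Laplacian of a symmetric nonnegative weighted adjacency matrix with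
connected graph and the `B_i` are symmetric positive semidefinite with positive definite
sum, then `L̂ ⊗ I_n + blockdiag(B_1,…,B_N)` is positive definite. -/
theorem laplacian_plus_blockdiag_posDef
    (N n : ℕ) (Ahat : Matrix (Fin N) (Fin N) ℝ)
    (hsymm : Ahatᵀ = Ahat)
    (hnonneg : ∀ i j, 0 ≤ Ahat i j)
    (hconn : ∀ i j : Fin N, Relation.ReflTransGen (fun u w => 0 < Ahat u w) i j)
    (B : Fin N → Matrix (Fin n) (Fin n) ℝ)
    (hBpsd : ∀ i, (B i).PosSemidef)
    (hBsum : (∑ i, B i).PosDef) :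
    Matrix.PosDef
      ((lapl Ahat ⊗ₖ (1 : Matrix (Fin n) (Fin n) ℝ))
        + Matrix.of fun p q : Fin N × Fin n =>
            if p.1 = q.1 then B p.1 p.2 q.2 else 0) := by
  have hs : ∀ i j, Ahat i j = Ahat j i := fun i j => congrFun (congrFun hsymm j) i
  refine Matrix.PosDef.of_dotProduct_mulVec_pos ?_ fun x hx => ?_
  · ext ⟨i, k⟩ ⟨j, l⟩
    have hB : ∀ i k l, B i k l = B i l k := fun i k l => by
      simpa using ((hBpsd i).1.apply k l).symm
    by_cases hij : i = j
    · subst hij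
      by_cases hkl : k = l
      · subst hkl; simp
      · simp [hkl, Ne.symm hkl, hB i l k]
    · simp [lapl, hij, Ne.symm hij, hs i j, Matrix.one_apply, eq_comm]
  · rw [full_quad]
    simp only [lapl_quad Ahat hs]
    have hE : ∀ k i j, 0 ≤ Ahat i j * (x (i, k) - x (j, k)) ^ 2 := fun k i j =>
      mul_nonneg (hnonneg i j) (sq_nonneg _)
    have hEj : ∀ k i, 0 ≤ ∑ j, Ahat i j * (x (i, k) - x (j, k)) ^ 2 := fun k i =>
      Finset.sum_nonneg fun j _ => hE k i j
    have hEi : ∀ k, 0 ≤ (1 / 2) * ∑ i, ∑ j, Ahat i j * (x (i, k) - x (j, k)) ^ 2 := fun k =>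
      mul_nonneg (by norm_num) (Finset.sum_nonneg fun i _ => hEj k i)
    have hEk := Finset.sum_nonneg fun k (_ : k ∈ Finset.univ) => hEi k
    have hBi : ∀ i, 0 ≤ star (fun k => x (i, k)) ⬝ᵥ (B i *ᵥ (fun k => x (i, k))) := fun i =>
      (hBpsd i).dotProduct_mulVec_nonneg _
    have hBs := Finset.sum_nonneg fun i (_ : i ∈ Finset.univ) => hBi i
    by_cases hc : ∀ u w, 0 < Ahat u w → ∀ k, x (u, k) = x (w, k)
    · have hall : ∀ i j k, x (i, k) = x (j, k) := by
        intro i j k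
        induction hconn i j with
        | refl => rfl
        | tail _ h ih => exact ih.trans (hc _ _ h k)
      obtain ⟨⟨i0, k0⟩, h0⟩ := Function.ne_iff.mp hx
      have hy : (fun k => x (i0, k)) ≠ 0 := Function.ne_iff.mpr ⟨k0, h0⟩
      have hp := hBsum.dotProduct_mulVec_pos hy
      rw [Matrix.sum_mulVec, dotProduct_sum] at hp
      refine add_pos_of_nonneg_of_pos hEk (hp.trans_eq ?_)
      refine Finset.sum_congr rfl fun i _ => ?_
      rw [show (fun k => x (i0, k)) = fun k => x (i, k) from funext fun k => hall i0 i k]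
    · push Not at hc
      obtain ⟨u, w, hA, k, hne⟩ := hc
      refine add_pos_of_pos_of_nonneg ?_ hBs
      refine Finset.sum_pos' (fun k _ => hEi k) ⟨k, Finset.mem_univ _, ?_⟩
      refine mul_pos (by norm_num) ?_
      refine Finset.sum_pos' (fun i _ => hEj k i) ⟨u, Finset.mem_univ _, ?_⟩
      refine Finset.sum_pos' (fun j _ => hE k u j) ⟨w, Finset.mem_univ _, ?_⟩
      exact mul_pos hA (by have := sub_ne_zero.mpr hne; positivity)
end

section
/- Fix integers M ≥ 1 and d ≥ 1 and a real number ε with 0 < ε < 1. Let C_1,…,C_d ∈ ℝ^{M×M} satisfy ‖C_i‖_∞ ≤ ε(ε − 1)/(ε − ε^{1−d}) for every i when d ≥ 2, and ‖C_1‖_∞ ≤ ε when d = 1, where ‖·‖_∞ is the matrix norm induced by the maximum (ℓ^∞) vector norm. Let C ∈ ℝ^{dM×dM} be the block companion matrix whose first block row is (C_1, C_2, …, C_d) and which has identity blocks I_M on the block subdiagonal and zero blocks elsewhere, and let Y = diag(I_M, εI_M, ε²I_M, …, ε^{d−1}I_M) (with Y = I_M when d = 1). Then ‖Y C Y⁻¹‖_∞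 ≤ ε, and consequently ‖Y C Y⁻¹‖ ≤ ε√(dM), where ‖·‖ denotes the spectral (2-)norm. -/
open Matrix

/-- Spectral (2-)norm of a real matrix. -/
noncomputable def specNorm {p q : Type*} [Fintype p] [Fintype q] [DecidableEq q]
    (A : Matrix p q ℝ) : ℝ :=
  ‖LinearMap.toContinuousLinearMap (Matrix.toEuclideanLin A)‖

/-- The matrix norm induced by the maximum (ℓ^∞) vector norm: the maximum absolute
row sum. -/
noncomputable def linftyNorm {p q : Type*} [Fintype p] [Fintype q]
    (A : Matrix p q ℝ) : ℝ :=
  ⨆ i, ∑ j, |A i j|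

/-- The block companion matrix with first block row `(C_1, …, C_d)`, identity blocks on
the block subdiagonal and zero blocks elsewhere. -/
def companion {M d : ℕ} (C : Fin d → Matrix (Fin M) (Fin M) ℝ) :
    Matrix (Fin d × Fin M) (Fin d × Fin M) ℝ :=
  Matrix.of fun r c =>
    if (r.1 : ℕ) = 0 then C c.1 r.2 c.2
    else if (r.1 : ℕ) = (c.1 : ℕ) + 1 then (if r.2 = c.2 then 1 else 0) else 0

theorem row_le_linftyNorm {p q : Type*} [Fintype p] [Fintype q] (A : Matrix p q ℝ) (i : p) :
    ∑ j, |A i j| ≤ linftyNorm A :=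
  le_ciSup (f := fun i => ∑ j, |A i j|) (Set.finite_range _).bddAbove i

theorem specNorm_le_of_rows {p : Type*} [Fintype p] [DecidableEq p] (A : Matrix p p ℝ) (ε : ℝ)
    (hε : 0 ≤ ε) (h : ∀ i, ∑ j, |A i j| ≤ ε) :
    specNorm A ≤ ε * Real.sqrt (Fintype.card p) := by
  unfold specNorm
  refine ContinuousLinearMap.opNorm_le_bound _ (by positivity) fun x => ?_
  have key : ∀ i, ‖(Matrix.toEuclideanLin A x) i‖ ≤ ε * ‖x‖ := by
    intro i
    have e : (Matrix.toEuclideanLin A x) i = ∑ j, A i j * x j := rfl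
    rw [e]
    calc ‖∑ j, A i j * x j‖ ≤ ∑ j, ‖A i j * x j‖ := norm_sum_le _ _
      _ ≤ ∑ j, |A i j| * ‖x‖ := by
        refine Finset.sum_le_sum fun j _ => ?_
        rw [norm_mul, Real.norm_eq_abs (A i j)]
        exact mul_le_mul_of_nonneg_left (PiLp.norm_apply_le x j) (abs_nonneg _)
      _ = (∑ j, |A i j|) * ‖x‖ := by rw [Finset.sum_mul]
      _ ≤ ε * ‖x‖ := mul_le_mul_of_nonneg_right (h i) (norm_nonneg _)
  change ‖Matrix.toEuclideanLin A x‖ ≤ _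
  rw [EuclideanSpace.norm_eq]
  apply Real.sqrt_le_iff.mpr
  refine ⟨by positivity, ?_⟩
  calc ∑ i, ‖(Matrix.toEuclideanLin A x) i‖ ^ 2 ≤ ∑ _i : p, (ε * ‖x‖) ^ 2 :=
        Finset.sum_le_sum fun i _ => pow_le_pow_left₀ (norm_nonneg _) (key i) 2
    _ = (ε * Real.sqrt (Fintype.card p) * ‖x‖) ^ 2 := by
        rw [Finset.sum_const, Finset.card_univ, nsmul_eq_mul, mul_pow, mul_pow, mul_pow,
          Real.sq_sqrt (Nat.cast_nonneg _)]
        ring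

theorem geom_bound (d : ℕ) (hd : 2 ≤ d) (ε : ℝ) (hε0 : 0 < ε) (hε1 : ε < 1) :
    ∑ k : Fin d, ε * (ε - 1) / (ε - ε ^ ((1:ℤ) - d)) * (ε ^ (k : ℕ))⁻¹ = ε := by
  rw [← Finset.mul_sum, Fin.sum_univ_eq_sum_range (fun k => (ε ^ k)⁻¹) d]
  have h1 : ∑ k ∈ Finset.range d, (ε ^ k)⁻¹ = (ε⁻¹ ^ d - 1) / (ε⁻¹ - 1) := by
    rw [← geom_sum_eq ((one_lt_inv₀ hε0).mpr hε1).ne']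
    simp
  have h2 : ε ^ ((1:ℤ) - d) = ε * ε⁻¹ ^ d := by
    rw [zpow_sub₀ hε0.ne', zpow_one, zpow_natCast, inv_pow, div_eq_mul_inv]
  have h3 : 1 < ε⁻¹ := (one_lt_inv₀ hε0).mpr hε1
  have h4 : 1 < ε⁻¹ ^ d := one_lt_pow₀ h3 (by omega)
  rw [h1, h2]
  generalize ε⁻¹ ^ d = t at h4
  have h5 : ε - ε * t ≠ 0 := by
    have : ε - ε * t = - (ε * (t - 1)) := by ring
    rw [this]
    exact neg_ne_zero.mpr (mul_pos hε0 (by linarith)).ne'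
  have h6 : ε⁻¹ - 1 = (1 - ε) / ε := by field_simp
  have h7 : (1 - ε) ≠ 0 := by linarith
  rw [h6]
  have := hε0.ne'
  rw [div_div_eq_mul_div, div_mul_div_comm, div_eq_iff (mul_ne_zero h5 h7)]
  ring

/-- **Scaling estimate for the block companion matrix.**
If `0 < ε < 1` and the blocks `C_i` satisfy `‖C_i‖_∞ ≤ ε(ε−1)/(ε−ε^{1−d})` (resp.
`‖C_1‖_∞ ≤ ε` when `d = 1`), then with `Y = diag(I, εI, …, ε^{d−1}I)` one has
`‖Y C Y⁻¹‖_∞ ≤ ε`, and consequently `‖Y C Y⁻¹‖ ≤ ε √(dM)` in the spectral norm. -/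
theorem companion_scaling_norm_bound
    (M d : ℕ) (hM : 1 ≤ M) (hd : 1 ≤ d)
    (ε : ℝ) (hε0 : 0 < ε) (hε1 : ε < 1)
    (C : Fin d → Matrix (Fin M) (Fin M) ℝ)
    (hC : 2 ≤ d → ∀ i, linftyNorm (C i) ≤ ε * (ε - 1) / (ε - ε ^ ((1:ℤ) - d)))
    (hC1 : d = 1 → ∀ i, linftyNorm (C i) ≤ ε) :
    linftyNorm ((Matrix.diagonal (fun r : Fin d × Fin M => ε ^ (r.1 : ℕ))) * companion C *
        (Matrix.diagonal (fun r : Fin d × Fin M => ε ^ (r.1 : ℕ)))⁻¹) ≤ ε ∧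
    specNorm ((Matrix.diagonal (fun r : Fin d × Fin M => ε ^ (r.1 : ℕ))) * companion C *
        (Matrix.diagonal (fun r : Fin d × Fin M => ε ^ (r.1 : ℕ)))⁻¹)
      ≤ ε * Real.sqrt (d * M) := by
  have hent : ∀ r c, ((Matrix.diagonal (fun r : Fin d × Fin M => ε ^ (r.1 : ℕ))) * companion C *
        (Matrix.diagonal (fun r : Fin d × Fin M => ε ^ (r.1 : ℕ)))⁻¹) r c
      = ε ^ (r.1 : ℕ) * companion C r c * (ε ^ (c.1 : ℕ))⁻¹ := by
    intro r c
    have hinv : (Matrix.diagonal (fun r : Fin d × Fin M => ε ^ (r.1 : ℕ)))⁻¹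
        = Matrix.diagonal (fun r : Fin d × Fin M => (ε ^ (r.1 : ℕ))⁻¹) := by
      apply Matrix.inv_eq_right_inv
      rw [Matrix.diagonal_mul_diagonal, ← Matrix.diagonal_one]
      congr 1
      funext r
      exact mul_inv_cancel₀ (pow_ne_zero _ hε0.ne')
    rw [hinv, Matrix.mul_diagonal, Matrix.diagonal_mul]
  have hrow : ∀ r, ∑ c, |((Matrix.diagonal (fun r : Fin d × Fin M => ε ^ (r.1 : ℕ))) *
        companion C * (Matrix.diagonal (fun r : Fin d × Fin M => ε ^ (r.1 : ℕ)))⁻¹) r c| ≤ ε := by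
    rintro ⟨r, m⟩
    simp only [hent]
    by_cases hr : (r : ℕ) = 0
    · have e : ∑ c : Fin d × Fin M, |ε ^ (r : ℕ) * companion C (r, m) c * (ε ^ (c.1 : ℕ))⁻¹|
          = ∑ k : Fin d, (∑ j, |C k m j|) * (ε ^ (k : ℕ))⁻¹ := by
        rw [Fintype.sum_prod_type]
        refine Finset.sum_congr rfl fun k _ => ?_
        rw [Finset.sum_mul]
        refine Finset.sum_congr rfl fun j _ => ?_
        have hp : 0 < (ε ^ (k : ℕ))⁻¹ := by positivity
        simp only [companion, Matrix.of_apply, hr, if_true, pow_zero, one_mul, abs_mul,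
          abs_of_pos hp]
      rw [e]
      rcases Nat.lt_or_ge d 2 with h2 | h2
      · obtain rfl : d = 1 := by omega
        simpa using (row_le_linftyNorm (C 0) m).trans (hC1 rfl 0)
      · refine le_trans (Finset.sum_le_sum fun k _ => ?_) (geom_bound d h2 ε hε0 hε1).le
        exact mul_le_mul_of_nonneg_right ((row_le_linftyNorm (C k) m).trans (hC h2 k))
          (by positivity)
    · obtain ⟨s, hs⟩ := Nat.exists_eq_succ_of_ne_zero hr
      have hsd : s < d := by have := r.2; omega
      rw [Finset.sum_eq_single ((⟨s, hsd⟩ : Fin d), m)]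
      · simp only [companion, Matrix.of_apply, hs, Nat.succ_eq_add_one, Nat.add_eq_zero_iff,
          one_ne_zero, and_false, if_false, if_true, mul_one]
        have : ε ^ (s + 1) * (ε ^ s)⁻¹ = ε := by
          have := hε0.ne'
          field_simp
          ring
        rw [this, abs_of_pos hε0]
      · rintro ⟨k, j⟩ - hne
        have : companion C (r, m) (k, j) = 0 := by
          simp only [companion, Matrix.of_apply, if_neg hr]
          split_ifs with h1 h2
          · exact absurd (Prod.ext (Fin.ext (by simp; omega)) h2.symm) hne
          · rfl
          · rfl
        simp [this]
      · simp
  constructor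
  · have : Nonempty (Fin d × Fin M) := ⟨(⟨0, hd⟩, ⟨0, hM⟩)⟩
    exact ciSup_le hrow
  · have := specNorm_le_of_rows _ ε hε0.le hrow
    simpa using this
end
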